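/- Let (A, ·_{α,β}, Ω) be an Ω-relative anti-flexible algebra and let R_α : A → A (α ∈ Ω) be a Rota-Baxter family operator on A, i.e. a family of k-linear maps satisfying R_α(x) ·_{α,β} R_β(y) = R_{αβ}(R_α(x) ·_{α,β} y + x ·_{α,β} R_β(y)) for all x, y ∈ A and α, β ∈ Ω. Then the operations x ≺_{α,β} y := x ·_{α,β} R_β(y) and x ≻_{α,β} y := R_α(x) ·_{α,β} y make (A, ≺_{α,β}, ≻_{α,β}, Ω) an Ω-relative pre-anti-flexible algebra. -/

import Mathlib

/-!
Write `(x, y, z)` for the relative associator of `·`. The Rota-Baxter identity says that `R`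
carries `x ≺ y + x ≻ y` to `R x · R y`, so the three associator-like expressions in `≺` and `≻`
are all values of this one associator:
* `(x ≻ y) ≺ z - x ≻ (y ≺ z) = (R x, y, R z)`,
* `(x ≺ y + x ≻ y) ≻ z - x ≻ (y ≻ z) = (R x, R y, z)`,
* `(x ≺ y) ≺ z - x ≺ (y ≺ z + y ≻ z) = (x, R y, R z)`.

Reversing the arguments fixes the first form and exchanges the other two, so the symmetry
`(x, y, z) = (z, y, x)` becomes the two pre-anti-flexible identities.
-/

section RelativeAlgebra

variable {Ω A : Type*} [Mul Ω] [AddCommGroup A]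

/-- The associator of a family of operations indexed by pairs in `Ω`. The operations are plain
functions, so that families of bilinear maps enter through their coercions. -/
def relativeAssociator (mul : Ω → Ω → A → A → A) (α β γ : Ω) (x y z : A) : A :=
  mul (α * β) γ (mul α β x y) z - mul α (β * γ) x (mul β γ y z)

/-- The defining identity of an `Ω`-relative anti-flexible algebra: the relative associator is
invariant under reversing its arguments together with their indices. -/
def IsRelativeAntiFlexible (mul : Ω → Ω → A → A → A) : Prop :=
  ∀ (α β γ : Ω) (x y z : A),
    relativeAssociator mul α β γ x y z = relativeAssociator mul γ β α z y x

/-- The defining identities of an `Ω`-relative pre-anti-flexible algebra, whose operations `≺` and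
`≻` are called `prec` and `succ`. -/
structure IsRelativePreAntiFlexible (prec succ : Ω → Ω → A → A → A) : Prop where
  succ_prec (α β γ : Ω) (x y z : A) :
    prec (α * β) γ (succ α β x y) z - succ α (β * γ) x (prec β γ y z) =
      prec (γ * β) α (succ γ β z y) x - succ γ (β * α) z (prec β α y x)
  succ_succ_eq_prec_prec (α β γ : Ω) (x y z : A) :
    succ (α * β) γ (prec α β x y + succ α β x y) z - succ α (β * γ) x (succ β γ y z) =
      prec (γ * β) α (prec γ β z y) x - prec γ (β * α) z (prec β α y x + succ β α y x)

/-- The identity of a Rota-Baxter family operator (of weight zero). -/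
def IsRotaBaxterFamily (mul : Ω → Ω → A → A → A) (R : Ω → A → A) : Prop :=
  ∀ (α β : Ω) (x y : A),
    mul α β (R α x) (R β y) = R (α * β) (mul α β (R α x) y + mul α β x (R β y))

end RelativeAlgebra

section InducedOperations

variable {Ω A : Type*}

/-- The operation `≺` induced by a family operator `R`. -/
def rotaBaxterPrec (mul : Ω → Ω → A → A → A) (R : Ω → A → A) (α β : Ω) (x y : A) : A :=
  mul α β x (R β y)

/-- The operation `≻` induced by a family operator `R`. -/
def rotaBaxterSucc (mul : Ω → Ω → A → A → A) (R : Ω → A → A) (α β : Ω) (x y : A) : A :=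
  mul α β (R α x) y

variable [Mul Ω] [AddCommGroup A] {mul : Ω → Ω → A → A → A} {R : Ω → A → A}

theorem rotaBaxterPrec_succ_sub_succ_prec (α β γ : Ω) (x y z : A) :
    rotaBaxterPrec mul R (α * β) γ (rotaBaxterSucc mul R α β x y) z -
        rotaBaxterSucc mul R α (β * γ) x (rotaBaxterPrec mul R β γ y z) =
      relativeAssociator mul α β γ (R α x) y (R γ z) :=
  rfl

namespace IsRotaBaxterFamily

theorem map_prec_add_succ (hR : IsRotaBaxterFamily mul R) (α β : Ω) (x y : A) :
    R (α * β) (rotaBaxterPrec mul R α β x y + rotaBaxterSucc mul R α β x y) =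
      mul α β (R α x) (R β y) := by
  rw [add_comm]
  exact (hR α β x y).symm

theorem succ_add_sub_succ_succ (hR : IsRotaBaxterFamily mul R) (α β γ : Ω) (x y z : A) :
    rotaBaxterSucc mul R (α * β) γ
          (rotaBaxterPrec mul R α β x y + rotaBaxterSucc mul R α β x y) z -
        rotaBaxterSucc mul R α (β * γ) x (rotaBaxterSucc mul R β γ y z) =
      relativeAssociator mul α β γ (R α x) (R β y) z :=
  congrArg (mul (α * β) γ · z - mul α (β * γ) (R α x) (mul β γ (R β y) z))
    (hR.map_prec_add_succ α β x y)

theorem prec_prec_sub_prec_add (hR : IsRotaBaxterFamily mul R) (α β γ : Ω) (x y z : A) :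
    rotaBaxterPrec mul R (α * β) γ (rotaBaxterPrec mul R α β x y) z -
        rotaBaxterPrec mul R α (β * γ) x
          (rotaBaxterPrec mul R β γ y z + rotaBaxterSucc mul R β γ y z) =
      relativeAssociator mul α β γ x (R β y) (R γ z) :=
  congrArg (mul (α * β) γ (mul α β x (R β y)) (R γ z) - mul α (β * γ) x ·)
    (hR.map_prec_add_succ β γ y z)

end IsRotaBaxterFamily

theorem rotaBaxterFamily_to_relativePreAntiFlexible_general
    (hmul : IsRelativeAntiFlexible mul) (hR : IsRotaBaxterFamily mul R) :
    IsRelativePreAntiFlexible (rotaBaxterPrec mul R) (rotaBaxterSucc mul R) where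
  succ_prec α β γ x y z := by
    simp only [rotaBaxterPrec_succ_sub_succ_prec]
    exact hmul α β γ (R α x) y (R γ z)
  succ_succ_eq_prec_prec α β γ x y z := by
    rw [hR.succ_add_sub_succ_succ, hR.prec_prec_sub_prec_add]
    exact hmul α β γ (R α x) (R β y) z

end InducedOperations

/-- a Rota-Baxter family operator on an Ω-relative anti-flexible
algebra induces an Ω-relative pre-anti-flexible algebra via
`x ≺_{α,β} y := x ·_{α,β} R_β(y)` and `x ≻_{α,β} y := R_α(x) ·_{α,β} y`. -/
theorem rotaBaxterFamily_to_relativePreAntiFlexible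
    (k : Type*) [Field k] (Ω : Type*) [CommSemigroup Ω]
    (A : Type*) [AddCommGroup A] [Module k A]
    (mul : Ω → Ω → A →ₗ[k] A →ₗ[k] A)
    (haf : ∀ (α β γ : Ω) (x y z : A),
      mul (α * β) γ (mul α β x y) z - mul α (β * γ) x (mul β γ y z) =
        mul (γ * β) α (mul γ β z y) x - mul γ (β * α) z (mul β α y x))
    (R : Ω → A →ₗ[k] A)
    (hRB : ∀ (α β : Ω) (x y : A),
      mul α β (R α x) (R β y) = R (α * β) (mul α β (R α x) y + mul α β x (R β y)))
    (prec succ : Ω → Ω → A → A → A)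
    (hprec : ∀ (α β : Ω) (x y : A), prec α β x y = mul α β x (R β y))
    (hsucc : ∀ (α β : Ω) (x y : A), succ α β x y = mul α β (R α x) y) :
    (∀ (α β γ : Ω) (x y z : A),
      prec (α * β) γ (succ α β x y) z - succ α (β * γ) x (prec β γ y z) =
        prec (γ * β) α (succ γ β z y) x - succ γ (β * α) z (prec β α y x)) ∧
    (∀ (α β γ : Ω) (x y z : A),
      succ (α * β) γ (prec α β x y + succ α β x y) z -
          succ α (β * γ) x (succ β γ y z) =
        prec (γ * β) α (prec γ β z y) x -
          prec γ (β * α) z (prec β α y x + succ β α y x)) := by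
  have h := rotaBaxterFamily_to_relativePreAntiFlexible_general
    (mul := (mul · · · ·)) (R := (R · ·)) haf hRB
  simp only [hprec, hsucc]
  exact ⟨h.succ_prec, h.succ_succ_eq_prec_prec⟩
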